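/- Let v₁, v₂, v₃, v₄, v₅ be nonzero vectors in ℂ³ such that no three of them are linearly dependent (i.e., any three of them are linearly independent, meaning no three of the corresponding points of ℂℙ² are collinear). If Q₁ and Q₂ are nonzero quadratic forms on ℂ³ with Q₁(vᵢ) = 0 and Q₂(vᵢ) = 0 for all i = 1,…,5, then Q₂ = c · Q₁ for some scalar c ∈ ℂ. -/

import Mathlib

/-!
Let `ℓ = 0` be the line through two of the points, `x` and `y`. A quadratic form `Q` vanishing at
`x` and `y` restricts to that line as `Q (s x + t y) = s t · polar Q x y`, so a suitable combination
of `Q₁` and `Q₂` vanishes on the whole line and therefore factors as `ℓ · m` with `m` linear.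
The other three points are not on the line, so `m` vanishes at all of them; as they span the space,
`m = 0`. Hence a quadratic form through the five points is determined by the scalar `polar Q x y`.
-/

open Module QuadraticMap

section CommRing

variable {R M : Type*} [CommRing R] [AddCommGroup M] [Module R M]

lemma quadraticMap_apply_eq_zero_of_mem_span_pair {N : Type*} [AddCommGroup N] [Module R N]
    {Q : QuadraticMap R M N} {x y w : M} (hx : Q x = 0) (hy : Q y = 0) (hxy : polar Q x y = 0)
    (hw : w ∈ Submodule.span R {x, y}) : Q w = 0 := by
  obtain ⟨s, t, rfl⟩ := Submodule.mem_span_pair.1 hw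
  simp [QuadraticMap.map_add Q, QuadraticMap.map_smul, hx, hy, hxy]

lemma exists_eq_linMulLin_of_forall_mem_ker {Q : QuadraticForm R M} {ℓ : Dual R M} {e : M}
    (he : ℓ e = 1) (hQ : ∀ w ∈ LinearMap.ker ℓ, Q w = 0) :
    ∃ m : Dual R M, Q = linMulLin ℓ m := by
  refine ⟨Q.polarBilin.flip e - Q e • ℓ, QuadraticMap.ext fun w ↦ ?_⟩
  have hker : Q (w - ℓ w • e) = 0 := hQ _ (by simp [he])
  calc
    Q w = Q (w - ℓ w • e + ℓ w • e) := by rw [sub_add_cancel]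
    _ = ℓ w * ℓ w * Q e + polar Q (w - ℓ w • e) (ℓ w • e) := by
      rw [QuadraticMap.map_add Q, hker, QuadraticMap.map_smul, zero_add, smul_eq_mul]
    _ = ℓ w * (polar Q w e - Q e * ℓ w) := by
      simp only [polar_sub_left, polar_smul_left, polar_smul_right, polar_self, smul_eq_mul]
      ring
    _ = linMulLin ℓ (Q.polarBilin.flip e - Q e • ℓ) w := by simp

end CommRing

section Field

variable {K V : Type*} [Field K] [AddCommGroup V] [Module K V]

lemma quadraticForm_eq_zero_of_forall_mem_ker_of_span_eq_top {Q : QuadraticForm K V}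
    {ℓ : Dual K V} (hker : ∀ w ∈ LinearMap.ker ℓ, Q w = 0) {s : Set V}
    (hs : Submodule.span K s = ⊤) (hℓ : ∀ v ∈ s, ℓ v ≠ 0) (hQ : ∀ v ∈ s, Q v = 0) : Q = 0 := by
  obtain rfl | hℓ0 := eq_or_ne ℓ 0
  · exact QuadraticMap.ext fun w ↦ hker w (by simp)
  obtain ⟨e, he⟩ := LinearMap.surjective hℓ0 1
  obtain ⟨m, rfl⟩ := exists_eq_linMulLin_of_forall_mem_ker he hker
  have hm : m = 0 := LinearMap.ext_on hs fun v hv ↦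
    (mul_eq_zero.1 (hQ v hv)).resolve_left (hℓ v hv)
  ext w
  simp [hm]

lemma exists_dual_ker_eq_of_finrank_add_one_eq {W : Submodule K V}
    (hW : finrank K W + 1 = finrank K V) : ∃ ℓ : Dual K V, LinearMap.ker ℓ = W := by
  have : FiniteDimensional K V := .of_finrank_pos (by lia)
  have hlt : W < ⊤ := Submodule.lt_top_of_finrank_lt_finrank (by lia)
  obtain ⟨ℓ, hℓ, hle⟩ := W.exists_le_ker_of_lt_top hlt
  have hrank := Module.Dual.finrank_ker_add_one_of_ne_zero hℓ
  exact ⟨ℓ, (Submodule.eq_of_le_of_finrank_eq hle (by lia)).symm⟩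

lemma linearIndependent_triple_iff_notMem_span_pair {x y z : V} :
    LinearIndependent K ![x, y, z] ↔
      LinearIndependent K ![x, y] ∧ z ∉ Submodule.span K {x, y} := by
  have hinit : Fin.init ![x, y, z] = ![x, y] := by
    ext i; fin_cases i <;> rfl
  rw [linearIndependent_finSucc', hinit, Matrix.range_cons_cons_empty]
  rfl

lemma quadraticForm_eq_zero_of_polar_eq_zero_of_five_points (hV : finrank K V = 3) {x y : V}
    {a : Fin 3 → V} (ha : LinearIndependent K a) (hxya : ∀ i, LinearIndependent K ![x, y, a i])
    {Q : QuadraticForm K V} (hx : Q x = 0) (hy : Q y = 0) (hQa : ∀ i, Q (a i) = 0)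
    (hxy : polar Q x y = 0) : Q = 0 := by
  simp only [linearIndependent_triple_iff_notMem_span_pair] at hxya
  have hline : finrank K (Submodule.span K {x, y}) = 2 := by
    rw [← Matrix.range_cons_cons_empty x y ![], finrank_span_eq_card (hxya 0).1, Fintype.card_fin]
  obtain ⟨ℓ, hℓ⟩ := exists_dual_ker_eq_of_finrank_add_one_eq (by rw [hline, hV])
  refine quadraticForm_eq_zero_of_forall_mem_ker_of_span_eq_top (ℓ := ℓ) (s := Set.range a)
    (fun w hw ↦ ?_) ?_ ?_ ?_
  · exact quadraticMap_apply_eq_zero_of_mem_span_pair hx hy hxy (hℓ ▸ hw)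
  · exact ha.span_eq_top_of_card_eq_finrank (by simp [hV])
  · rintro _ ⟨i, rfl⟩ hi
    exact (hxya i).2 (hℓ ▸ LinearMap.mem_ker.2 hi)
  · simpa using hQa

/- Up to relabelling, the two independence hypotheses say exactly that the five points are distinct
and no four of them are collinear. -/
theorem conic_through_five_points_unique_general (hV : finrank K V = 3) {v : Fin 5 → V}
    (hline : ∀ i, i ≠ 0 → i ≠ 1 → LinearIndependent K ![v 0, v 1, v i])
    (hbasis : LinearIndependent K ![v 2, v 3, v 4]) {Q₁ Q₂ : QuadraticForm K V} (hne : Q₁ ≠ 0)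
    (hQ₁ : ∀ i, Q₁ (v i) = 0) (hQ₂ : ∀ i, Q₂ (v i) = 0) : ∃ c : K, Q₂ = c • Q₁ := by
  have eq_zero {Q : QuadraticForm K V} (hQ : ∀ i, Q (v i) = 0) (h : polar Q (v 0) (v 1) = 0) :
      Q = 0 :=
    quadraticForm_eq_zero_of_polar_eq_zero_of_five_points hV hbasis
      (by simp [Fin.forall_fin_succ, hline]) (hQ 0) (hQ 1) (by simp [Fin.forall_fin_succ, hQ]) h
  have hpolar : polar Q₁ (v 0) (v 1) ≠ 0 := fun h ↦ hne (eq_zero hQ₁ h)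
  refine ⟨polar Q₂ (v 0) (v 1) / polar Q₁ (v 0) (v 1), sub_eq_zero.1 (eq_zero ?_ ?_)⟩
  · simp [hQ₁, hQ₂]
  · simp [sub_eq_add_neg, polar_add, polar_neg, polar_smul, hpolar]

end Field

/-- Uniqueness of the conic through five points of ℂℙ² in general position:
if no three of five nonzero vectors in ℂ³ are linearly dependent, then any two
nonzero quadratic forms vanishing on all five are proportional. -/
theorem conic_through_five_points_unique
    (v : Fin 5 → (Fin 3 → ℂ)) (hv : ∀ i, v i ≠ 0)
    (hind : ∀ i j k : Fin 5, i ≠ j → i ≠ k → j ≠ k →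
      LinearIndependent ℂ ![v i, v j, v k])
    (Q₁ Q₂ : QuadraticForm ℂ (Fin 3 → ℂ))
    (h1 : Q₁ ≠ 0) (h2 : Q₂ ≠ 0)
    (hQ₁ : ∀ i, Q₁ (v i) = 0) (hQ₂ : ∀ i, Q₂ (v i) = 0) :
    ∃ c : ℂ, Q₂ = c • Q₁ := by
  exact conic_through_five_points_unique_general (by simp)
    (fun i hi0 hi1 ↦ hind 0 1 i (by decide) hi0.symm hi1.symm)
    (hind 2 3 4 (by decide) (by decide) (by decide)) h1 hQ₁ hQ₂
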